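/- Let q ≥ 1 and let f, g be two positive continuous functions on [0, ∞) such that for x > 0 the integral I^{α,β,η,μ}_{x,k}[(f+g)^q] is finite. If 0 < m ≤ f(τ)/g(τ) for all τ ∈ (0, x), then I^{α,β,η,μ}_{x,k}[g^q] ≤ (1/(m+1)^q) · I^{α,β,η,μ}_{x,k}[(f+g)^q]. -/

import Mathlib

/-!
For `0 < τ < x` every factor of the kernel `Fker` is nonnegative: the hypergeometric factor is a
series of nonnegative terms, because its parameters `α + β + μ`, `-η`, `α` are positive and its
argument lies in `(0, 1)`. From `m ≤ f / g` one gets `(m + 1) * g ≤ f + g`, hence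
`g ^ q ≤ (f + g) ^ q / (m + 1) ^ q`, and integrating this against the kernel gives the claim.
Only the integrability of the larger integrand is needed, since the smaller one is nonnegative.
-/

open MeasureTheory Real Set

/-- The Gauss hypergeometric series `₂F₁(a, b; c; z)`. -/
noncomputable def gauss2F1 (a b c z : ℝ) : ℝ :=
  ∑' n : ℕ, ((ascPochhammer ℝ n).eval a * (ascPochhammer ℝ n).eval b /
    ((ascPochhammer ℝ n).eval c * (n.factorial : ℝ))) * z ^ n

/-- The kernel `F(x, τ)` of the generalized k-fractional integral operator. -/
noncomputable def Fker (α β η μ k x τ : ℝ) : ℝ :=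
  ((k + 1) ^ (μ + β + 1) * x ^ ((k + 1) * (-α - β - 2 * μ)) / Real.Gamma α) *
    τ ^ ((k + 1) * μ) * (x ^ (k + 1) - τ ^ (k + 1)) ^ (α - 1) *
    gauss2F1 (α + β + μ) (-η) α (1 - (τ / x) ^ (k + 1))

/-- The generalized k-fractional integral operator `I^{α,β,η,μ}_{x,k}[f]`. -/
noncomputable def genKInt (α β η μ k x : ℝ) (f : ℝ → ℝ) : ℝ :=
  ∫ τ in (0:ℝ)..x, Fker α β η μ k x τ * τ ^ k * f τ

/-- Termwise positivity; no convergence is needed, as a divergent `tsum` is `0`. -/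
theorem gauss2F1_nonneg {a b c z : ℝ} (ha : 0 < a) (hb : 0 < b) (hc : 0 < c) (hz : 0 ≤ z) :
    0 ≤ gauss2F1 a b c z := by
  refine tsum_nonneg fun n => ?_
  have h1 := (ascPochhammer_pos n a ha).le
  have h2 := (ascPochhammer_pos n b hb).le
  have h3 := (ascPochhammer_pos n c hc).le
  positivity

theorem Fker_nonneg {α β η μ k x τ : ℝ} (hk : 0 ≤ k) (hα : 0 < α) (hαβμ : 0 < α + β + μ)
    (hη : η < 0) (hτ : 0 < τ) (hτx : τ < x) : 0 ≤ Fker α β η μ k x τ := by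
  have hx : 0 < x := hτ.trans hτx
  have hΓ := Real.Gamma_pos_of_pos hα
  have h1 : 0 ≤ x ^ (k + 1) - τ ^ (k + 1) :=
    sub_nonneg.2 (Real.rpow_le_rpow hτ.le hτx.le (by linarith))
  have h2 : 0 ≤ 1 - (τ / x) ^ (k + 1) :=
    sub_nonneg.2 (Real.rpow_le_one (by positivity) ((div_le_one hx).2 hτx.le) (by linarith))
  have h3 := gauss2F1_nonneg hαβμ (neg_pos.2 hη) hα h2
  unfold Fker
  positivity

theorem g_pow_bound (α β η μ k x : ℝ)
    (hk : 0 ≤ k) (hα : max 0 (-β - μ) < α) (hβ : β < 1) (hμ : -1 < μ)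
    (hη1 : β - 1 < η) (hη2 : η < 0) (hx : 0 < x) (q m : ℝ) (f g : ℝ → ℝ)
    (hfc : ContinuousOn f (Ici 0)) (hgc : ContinuousOn g (Ici 0))
    (hfpos : ∀ t ∈ Ici (0:ℝ), 0 < f t) (hgpos : ∀ t ∈ Ici (0:ℝ), 0 < g t)
    (hq : 1 ≤ q) (hm : 0 < m)
    (hfin : IntervalIntegrable (fun τ => Fker α β η μ k x τ * τ ^ k * ((f τ + g τ) ^ q)) volume 0 x)
    (hbd : ∀ τ ∈ Ioo (0:ℝ) x, m ≤ f τ / g τ) :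
    genKInt α β η μ k x (fun τ => g τ ^ q) ≤ (1 / (m + 1) ^ q) * (genKInt α β η μ k x (fun τ => (f τ + g τ) ^ q)) := by
  obtain ⟨hα0, hα1⟩ := max_lt_iff.1 hα
  have hK : ∀ τ ∈ Ioo (0:ℝ) x, 0 ≤ Fker α β η μ k x τ * τ ^ k := fun τ hτ =>
    mul_nonneg (Fker_nonneg hk hα0 (by linarith) hη2 hτ.1 hτ.2) (Real.rpow_nonneg hτ.1.le k)
  unfold genKInt
  rw [← intervalIntegral.integral_const_mul, intervalIntegral.integral_of_le hx.le,
    intervalIntegral.integral_of_le hx.le, integral_Ioc_eq_integral_Ioo,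
    integral_Ioc_eq_integral_Ioo]
  refine integral_mono_of_nonneg ?_ ?_ ?_
  · filter_upwards [ae_restrict_mem measurableSet_Ioo] with τ hτ
    exact mul_nonneg (hK τ hτ) (Real.rpow_nonneg (hgpos τ hτ.1.le).le q)
  · exact (((intervalIntegrable_iff_integrableOn_Ioo_of_le hx.le).1 hfin).const_mul _)
  · filter_upwards [ae_restrict_mem measurableSet_Ioo] with τ hτ
    have hg := hgpos τ hτ.1.le
    have hle : (m + 1) * g τ ≤ f τ + g τ := by
      linarith [(le_div_iff₀ hg).1 (hbd τ hτ)]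
    have hpow : (m + 1) ^ q * g τ ^ q ≤ (f τ + g τ) ^ q := by
      rw [← Real.mul_rpow (by positivity) hg.le]
      exact Real.rpow_le_rpow (by positivity) hle (by linarith)
    have hm1 : 0 < (m + 1) ^ q := by positivity
    calc Fker α β η μ k x τ * τ ^ k * g τ ^ q
        ≤ Fker α β η μ k x τ * τ ^ k * ((f τ + g τ) ^ q / (m + 1) ^ q) :=
          mul_le_mul_of_nonneg_left ((le_div_iff₀' hm1).2 hpow) (hK τ hτ)
      _ = 1 / (m + 1) ^ q * (Fker α β η μ k x τ * τ ^ k * (f τ + g τ) ^ q) := by ring
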